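/- The family ψ = (ψ_n) is a chain map from C^{BR_U}_*(X;ℤ) to the coinvariant group chain complex C^{gp}_*(M;ℤ)_G, i.e. ψ_{n−1} ∘ ∂^{BR_U}_n = ∂^{gp}_n ∘ ψ_n for every integer n. -/

import Mathlib

open FreeAbelianGroup
open scoped TensorProduct

namespace GAlex

variable {G M A : Type*} [Group G] [AddCommGroup M] [DistribMulAction Gᵐᵒᵖ M] [AddCommGroup A]

/-- The right action `m · g` of a group element `g : G` on `m : M`
(coming from the right `ℤ[G]`-module structure on `M`). -/
def ract (m : M) (g : G) : M := MulOpposite.op g • m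

variable (φ : G →* G)

/-- The operation `(m,g) ⊳ (n,h) = (mh + n(φ(h) − h), h⁻¹gh)` of the `G`-Alexander biquandle. -/
def under (x y : M × G) : M × G :=
  (ract x.1 y.2 + ract y.1 (φ y.2) - ract y.1 y.2, y.2⁻¹ * x.2 * y.2)

/-- The operation `(m,g) ⊚ (n,h) = (mφ(h), g)` of the `G`-Alexander biquandle. -/
def overOp (x y : M × G) : M × G := (ract x.1 (φ y.2), x.2)

/-- The face `g_{⟨p⟩}` (delete the `p`-th entry). -/
def dGdel (n : ℕ) (p : Fin (n + 1)) (g : Fin (n + 1) → G) : Fin n → G :=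
  fun j => g (p.succAbove j)

/-- The face `g_{⟨⊲p⟩}` (conjugate the first entries by `g p` and delete the `p`-th entry). -/
def dGconj (n : ℕ) (p : Fin (n + 1)) (g : Fin (n + 1) → G) : Fin n → G :=
  fun j => if (j : ℕ) < (p : ℕ) then (g p)⁻¹ * g j.castSucc * g p else g j.succ

/-- The face `m_{⟨p⟩}` (merge the two entries adjacent to position `p`;
for `p = 0` drop the first entry). -/
def dMmer (n : ℕ) (p : Fin (n + 1)) (m : Fin (n + 1) → M) : Fin n → M :=
  fun j =>
    if (j : ℕ) + 1 < (p : ℕ) then m j.castSucc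
    else if (j : ℕ) + 1 = (p : ℕ) then m j.castSucc + m j.succ
    else m j.succ

/-- The face `m_{⟨⊲p⟩}`. -/
def dMconj (n : ℕ) (p : Fin (n + 1)) (g : Fin (n + 1) → G) (m : Fin (n + 1) → M) : Fin n → M :=
  fun j =>
    if (j : ℕ) + 1 < (p : ℕ) then ract (m j.castSucc) (g p)
    else if (j : ℕ) + 1 = (p : ℕ) then ract (m j.castSucc) (g p) + ract (m j.succ) (φ (g p))
    else ract (m j.succ) (φ (g p))

/-- The boundary map `∂^{BR_U}_{n+1} : C^{BR_U}_{n+1}(X;ℤ) → C^{BR_U}_n(X;ℤ)`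
(the boundary `∂^{BR_U}_k` is `0` for `k ≤ 1`, which agrees with this formula at `n = 0`). -/
def dBRU (n : ℕ) :
    FreeAbelianGroup ((Fin (n + 1) → G) × (Fin (n + 1) → M)) →+
      FreeAbelianGroup ((Fin n → G) × (Fin n → M)) :=
  FreeAbelianGroup.lift fun x =>
    ∑ p : Fin (n + 1),
      (-1 : ℤ) ^ (p : ℕ) •
        (FreeAbelianGroup.of (dGdel n p x.1, dMmer n p x.2) -
          FreeAbelianGroup.of (dGconj n p x.1, dMconj φ n p x.1 x.2))

/-- The birack boundary map `∂^{BR}_{n+1} : C^{BR}_{n+1}(X;ℤ) → C^{BR}_n(X;ℤ)`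
for the `G`-Alexander biquandle `X = M × G` (with trivial `X`-set). -/
def dBR (n : ℕ) :
    FreeAbelianGroup (Fin (n + 1) → M × G) →+ FreeAbelianGroup (Fin n → M × G) :=
  FreeAbelianGroup.lift fun x =>
    ∑ p : Fin (n + 1),
      (-1 : ℤ) ^ (p : ℕ) •
        (FreeAbelianGroup.of (fun j => x (p.succAbove j)) -
          FreeAbelianGroup.of (fun j : Fin n =>
            if (j : ℕ) < (p : ℕ) then under φ (x j.castSucc) (x p)
            else overOp φ (x j.succ) (x p)))

/-- `γ_n((m₁,g₁),…,(m_n,g_n)) = (g₁,…,g_n; m₁−m₂, …, m_{n−1}−m_n, m_n)`. -/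
def gammaMap (n : ℕ) :
    FreeAbelianGroup (Fin n → M × G) →+ FreeAbelianGroup ((Fin n → G) × (Fin n → M)) :=
  FreeAbelianGroup.lift fun x =>
    FreeAbelianGroup.of
      (fun j => (x j).2,
       fun j => (x j).1 - if h : (j : ℕ) + 1 < n then (x ⟨(j : ℕ) + 1, h⟩).1 else 0)

/-- `r_n(g₁,…,g_n; m₁,…,m_n) = ((m₁+⋯+m_n, g₁), (m₂+⋯+m_n, g₂), …, (m_n, g_n))`. -/
def rMap (n : ℕ) :
    FreeAbelianGroup ((Fin n → G) × (Fin n → M)) →+ FreeAbelianGroup (Fin n → M × G) :=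
  FreeAbelianGroup.lift fun p =>
    FreeAbelianGroup.of fun j => ((∑ i ∈ Finset.Ici j, p.2 i), p.1 j)

/-- The boundary map `∂^{BR_U}_{d+1}` of `C^{BR_U}_*(X;ℤ)_X` (the version with `X`-set `X`,
whose degree-`d` chain group is free on `(1+d)`-tuples); it is `0` in degrees `≤ 1`. -/
def dBRUX : (d : ℕ) →
    FreeAbelianGroup ((Fin (d + 2) → G) × (Fin (d + 2) → M)) →+
      FreeAbelianGroup ((Fin (d + 1) → G) × (Fin (d + 1) → M))
  | 0 => 0
  | d + 1 =>
    FreeAbelianGroup.lift fun x =>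
      ∑ i : Fin (d + 2),
        (-1 : ℤ) ^ (i : ℕ) •
          (FreeAbelianGroup.of (dGdel (d + 2) i.succ x.1, dMmer (d + 2) i.succ x.2) -
            FreeAbelianGroup.of (dGconj (d + 2) i.succ x.1, dMconj φ (d + 2) i.succ x.1 x.2))

/-- The boundary map `∂^{BR}_{d+1}` of `C^{BR}_*(X;ℤ)_X` (the version with `X`-set `X`);
it is `0` in degrees `≤ 1`. -/
def dBRX : (d : ℕ) →
    FreeAbelianGroup (Fin (d + 2) → M × G) →+ FreeAbelianGroup (Fin (d + 1) → M × G)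
  | 0 => 0
  | d + 1 =>
    FreeAbelianGroup.lift fun x =>
      ∑ i : Fin (d + 2),
        (-1 : ℤ) ^ (i : ℕ) •
          (FreeAbelianGroup.of (fun j => x (i.succ.succAbove j)) -
            FreeAbelianGroup.of (fun j : Fin (d + 2) =>
              if (j : ℕ) < (i : ℕ) + 1 then under φ (x j.castSucc) (x i.succ)
              else overOp φ (x j.succ) (x i.succ)))


/-- The subgroup of `G`-coinvariants relations in `C^{gp}_n(M;ℤ)`:
generated by all `(m₁g,…,m_ng) − (m₁,…,m_n)`. -/
def coinvSub (n : ℕ) : AddSubgroup (FreeAbelianGroup (Fin n → M)) :=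
  AddSubgroup.closure
    {z | ∃ (m : Fin n → M) (g : G),
        z = FreeAbelianGroup.of (fun i => ract (m i) g) - FreeAbelianGroup.of m}

/-- The coinvariant group chain group `C^{gp}_n(M;ℤ)_G`. -/
abbrev CgpG (n : ℕ) : Type _ :=
  FreeAbelianGroup (Fin n → M) ⧸ coinvSub (G := G) (M := M) n

/-- The group-homology boundary map `∂^{gp}_{n+1} : C^{gp}_{n+1}(M;ℤ) → C^{gp}_n(M;ℤ)`
(it is `0` in degrees `≤ 1`, which agrees with this formula at `n = 0`). -/
def dgp (n : ℕ) :
    FreeAbelianGroup (Fin (n + 1) → M) →+ FreeAbelianGroup (Fin n → M) :=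
  FreeAbelianGroup.lift fun m =>
    (∑ p : Fin (n + 1), (-1 : ℤ) ^ (p : ℕ) • FreeAbelianGroup.of (dMmer n p m)) +
      (-1 : ℤ) ^ (n + 1) • FreeAbelianGroup.of fun j : Fin n => m j.castSucc

/-- `|k| = k₁ + ⋯ + k_n`. -/
def wt {n : ℕ} (k : Fin n → Bool) : ℕ := ∑ i, if k i then 1 else 0

/-- `g_{k,i} = φ(g₀^{k₀} ⋯ g_i^{k_i}) · g_{i+1}^{k_{i+1}} ⋯ g_{n-1}^{k_{n-1}}`
(indices written `0`-based; the products are ordered). -/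
def gki {n : ℕ} (g : Fin n → G) (k : Fin n → Bool) (i : Fin n) : G :=
  φ ((((List.finRange n).filter fun j => decide (j ≤ i)).map
        fun j => if k j then g j else 1).prod) *
    (((List.finRange n).filter fun j => decide (i < j)).map
        fun j => if k j then g j else 1).prod

/-- The value of `ψ` on a generator:
`Σ_{k, k₀ = 0} (−1)^{|k|} (m₀ g_{k,0}, …, m_n g_{k,n})`, as an element of the free
abelian group (before passing to coinvariants). -/
def psiVal (n : ℕ) (x : (Fin (n + 1) → G) × (Fin (n + 1) → M)) :
    FreeAbelianGroup (Fin (n + 1) → M) :=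
  ∑ k ∈ Finset.univ.filter fun k : Fin (n + 1) → Bool => k 0 = false,
    (-1 : ℤ) ^ wt k • FreeAbelianGroup.of fun i => ract (x.2 i) (gki φ x.1 k i)

/-- `ψ` as a homomorphism into the free abelian group (before coinvariants). -/
def psiFree (n : ℕ) :
    FreeAbelianGroup ((Fin (n + 1) → G) × (Fin (n + 1) → M)) →+
      FreeAbelianGroup (Fin (n + 1) → M) :=
  FreeAbelianGroup.lift (psiVal φ n)

/-- The homomorphism `ψ : C^{BR_U} → C^{gp}(M;ℤ)_G`. -/
def psiG (n : ℕ) :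
    FreeAbelianGroup ((Fin (n + 1) → G) × (Fin (n + 1) → M)) →+
      CgpG (G := G) (M := M) (n + 1) :=
  (QuotientAddGroup.mk' (coinvSub (G := G) (M := M) (n + 1))).comp (psiFree φ n)

/-- The homomorphism `ψ_{•,λ}`, sending a generator `x` to `ψ(x) ⊗ λ(x₁)` where `x₁` is the
first `G`-entry of `x`. -/
noncomputable def psiLam (lam : G → A) (n : ℕ) :
    FreeAbelianGroup ((Fin (n + 1) → G) × (Fin (n + 1) → M)) →+
      TensorProduct ℤ (CgpG (G := G) (M := M) (n + 1)) A :=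
  FreeAbelianGroup.lift fun x =>
    (QuotientAddGroup.mk' (coinvSub (G := G) (M := M) (n + 1)) (psiVal φ n x)) ⊗ₜ[ℤ]
      lam (x.1 0)

/-- `D^{gp}_n(M;ℤ)_G`: the image in the coinvariants of the subgroup generated by tuples
with a vanishing entry in a position `1 ≤ i ≤ n−1`. -/
def DgpGsub (n : ℕ) : AddSubgroup (CgpG (G := G) (M := M) n) :=
  (AddSubgroup.closure
      {z : FreeAbelianGroup (Fin n → M) |
        ∃ (m : Fin n → M) (i : Fin n),
          (i : ℕ) + 1 < n ∧ m i = 0 ∧ z = FreeAbelianGroup.of m}).map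
    (QuotientAddGroup.mk' (coinvSub (G := G) (M := M) n))

/-- Ordered product. -/
def oP (n : ℕ) (f : Fin n → G) : G := ((List.finRange n).map f).prod

theorem oP_succ (n : ℕ) (f : Fin (n + 1) → G) :
    oP (n + 1) f = f 0 * oP n (fun j => f j.succ) := by
  simp [oP, List.finRange_succ, Function.comp_def]

theorem filter_prod {α : Type*} (l : List α) (q : α → Bool) (a : α → G) :
    ((l.filter q).map a).prod = (l.map fun j => if q j then a j else 1).prod := by
  induction l with
  | nil => simp
  | cons x l ih =>
    by_cases h : q x <;> simp [List.filter_cons, h, ih]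

/-- Coefficient in terms of a sequence. -/
def Qc {n : ℕ} (a : Fin n → G) (i : Fin n) : G :=
  φ (oP n fun j => if j ≤ i then a j else 1) * oP n fun j => if i < j then a j else 1

theorem gki_eq {n : ℕ} (g : Fin n → G) (k : Fin n → Bool) (i : Fin n) :
    gki φ g k i = Qc φ (fun j => if k j then g j else 1) i := by
  unfold gki Qc oP
  rw [filter_prod, filter_prod]
  simp

/-- Conjugation face by `c`. -/
def cf (n : ℕ) (p : ℕ) (c : G) (f : Fin (n + 1) → G) : Fin n → G :=
  fun j => if (j : ℕ) < p then c⁻¹ * f j.castSucc * c else f j.succ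

theorem oP_cf (n : ℕ) (p : Fin (n + 1)) (f : Fin (n + 1) → G) :
    f p * oP n (cf n p (f p) f) = oP (n + 1) f := by
  induction n with
  | zero =>
    obtain rfl : p = 0 := Fin.fin_one_eq_zero p
    rw [oP_succ]; simp [oP]
  | succ n ih =>
    refine Fin.cases ?_ (fun q => ?_) p
    · rw [oP_succ (n + 1)]; simp [cf, Function.comp_def, funext_iff]; congr 1
    · rw [oP_succ (n + 1) f, ← ih q (fun j => f j.succ), oP_succ n]
      have h : (fun j : Fin n => cf (n + 1) (q.succ : Fin (n + 2)) (f q.succ) f j.succ)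
          = cf n q (f q.succ) (fun j => f j.succ) := by
        funext j
        simp [cf]
      rw [h]
      simp [cf, mul_assoc]

theorem phi_oP_congr {n : ℕ} {f f' : Fin n → G} (h : ∀ j, φ (f j) = φ (f' j)) :
    φ (oP n f) = φ (oP n f') := by
  unfold oP
  rw [map_list_prod, map_list_prod, List.map_map, List.map_map]
  congr 2
  funext j
  exact h j

theorem phi_conj (hφ : ∀ g : G, φ g ∈ Subgroup.center G) (c a : G) :
    φ (c⁻¹ * a * c) = φ a := by
  have := Subgroup.mem_center_iff.1 (hφ a) (φ c)⁻¹
  rw [map_mul, map_mul, map_inv, this, mul_assoc, inv_mul_cancel, mul_one]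

theorem Qc_cast (hφ : ∀ g : G, φ g ∈ Subgroup.center G) {n : ℕ} (p : Fin (n + 1))
    (a : Fin (n + 1) → G) (j : Fin n) (h : (j : ℕ) < p) :
    Qc φ a j.castSucc = a p * Qc φ (cf n p (a p) a) j := by
  unfold Qc
  rw [← mul_assoc, Subgroup.mem_center_iff.1 (hφ _) (a p), mul_assoc]
  congr 1
  · rw [← oP_cf n p]
    have hp : ¬ p ≤ j.castSucc := by simp [Fin.le_def]; omega
    rw [if_neg hp, one_mul]
    refine phi_oP_congr φ fun i => ?_
    simp only [cf, Fin.le_def, Fin.val_castSucc, Fin.val_succ]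
    by_cases h1 : (i : ℕ) ≤ j
    · have h2 : (i : ℕ) < p := by omega
      simp [h1, h2, phi_conj φ hφ]
    · by_cases h2 : (i : ℕ) < p
      · simp [h1, h2]
      · have h3 : ¬ ((i : ℕ) + 1 ≤ j) := by omega
        simp [h1, h2, h3]
  · rw [← oP_cf n p]
    have hp : j.castSucc < p := by simp [Fin.lt_def]; omega
    rw [if_pos hp]
    congr 2
    funext i
    simp only [cf, Fin.lt_def, Fin.val_castSucc, Fin.val_succ]
    by_cases h2 : (i : ℕ) < p
    · by_cases h1 : (j : ℕ) < i <;> simp [h1, h2]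
    · have h1 : (j : ℕ) < i := by omega
      have h3 : (j : ℕ) < i + 1 := by omega
      simp [h1, h2, h3]

theorem Qc_succ (hφ : ∀ g : G, φ g ∈ Subgroup.center G) {n : ℕ} (p : Fin (n + 1))
    (a : Fin (n + 1) → G) (j : Fin n) (h : (p : ℕ) ≤ j + 1) :
    Qc φ a j.succ = φ (a p) * Qc φ (cf n p (a p) a) j := by
  unfold Qc
  rw [← mul_assoc, ← map_mul]
  congr 1
  · rw [← oP_cf n p]
    have hp : p ≤ j.succ := by simp [Fin.le_def]; omega
    rw [if_pos hp, map_mul, map_mul]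
    congr 1
    refine phi_oP_congr φ fun i => ?_
    simp only [cf, Fin.le_def, Fin.val_castSucc, Fin.val_succ]
    by_cases h2 : (i : ℕ) < p
    · have h1 : (i : ℕ) ≤ j := by omega
      have h3 : (i : ℕ) ≤ j + 1 := by omega
      simp [h1, h2, h3]
    · simp [h2]
  · rw [← oP_cf n p]
    have hp : ¬ j.succ < p := by simp [Fin.lt_def]; omega
    rw [if_neg hp, one_mul]
    congr 1
    funext i
    simp only [cf, Fin.lt_def, Fin.val_castSucc, Fin.val_succ]
    by_cases h2 : (i : ℕ) < p
    · have h1 : ¬ (j : ℕ) < i := by omega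
      have h3 : ¬ (j : ℕ) + 1 < i := by omega
      simp [h1, h2, h3]
    · simp [h2]

/-- The face of `g` for `b = true` / `b = false`. -/
def gface (n : ℕ) (p : Fin (n + 1)) (g : Fin (n + 1) → G) (b : Bool) : Fin n → G :=
  if b then dGconj n p g else dGdel n p g

theorem seq_face {n : ℕ} (p : Fin (n + 1)) (g : Fin (n + 1) → G) (b : Bool) (k : Fin n → Bool) :
    cf n p (if b then g p else 1)
      (fun j => if (p.insertNth (α := fun _ => Bool) b k : Fin (n + 1) → Bool) j then g j else 1)
      = fun j => if k j then gface n p g b j else 1 := by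
  funext j
  by_cases h : (j : ℕ) < p
  · have h1 : p.succAbove j = j.castSucc := Fin.succAbove_of_castSucc_lt _ _ (by simpa [Fin.lt_def])
    have h2 : (p.insertNth (α := fun _ => Bool) b k : Fin (n + 1) → Bool) j.castSucc = k j := by
      rw [← h1, Fin.insertNth_apply_succAbove]
    simp only [cf, h, if_true, h2]
    cases b <;> cases k j <;> simp [gface, dGconj, dGdel, h, h1]
  · have h1 : p.succAbove j = j.succ :=
      Fin.succAbove_of_le_castSucc _ _ (by simpa [Fin.le_def] using h)
    have h2 : (p.insertNth (α := fun _ => Bool) b k : Fin (n + 1) → Bool) j.succ = k j := by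
      rw [← h1, Fin.insertNth_apply_succAbove]
    simp only [cf, h, if_false, h2]
    cases b <;> cases k j <;> simp [gface, dGconj, dGdel, h, h1]

theorem gki_cast (hφ : ∀ g : G, φ g ∈ Subgroup.center G) {n : ℕ} (p : Fin (n + 1))
    (g : Fin (n + 1) → G) (b : Bool) (k : Fin n → Bool) (j : Fin n) (h : (j : ℕ) < p) :
    gki φ g (p.insertNth (α := fun _ => Bool) b k) j.castSucc
      = (if b then g p else 1) * gki φ (gface n p g b) k j := by
  rw [gki_eq, gki_eq, Qc_cast φ hφ p _ j h, Fin.insertNth_apply_same, seq_face]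

theorem gki_succ (hφ : ∀ g : G, φ g ∈ Subgroup.center G) {n : ℕ} (p : Fin (n + 1))
    (g : Fin (n + 1) → G) (b : Bool) (k : Fin n → Bool) (j : Fin n) (h : (p : ℕ) ≤ j + 1) :
    gki φ g (p.insertNth (α := fun _ => Bool) b k) j.succ
      = φ (if b then g p else 1) * gki φ (gface n p g b) k j := by
  rw [gki_eq, gki_eq, Qc_succ φ hφ p _ j h, Fin.insertNth_apply_same, seq_face]

theorem ract_ract (m : M) (a b : G) : ract (ract m a) b = ract m (a * b) := by
  simp [ract, mul_smul]

theorem ract_one (m : M) : ract m (1 : G) = m := by simp [ract]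

theorem ract_add (m m' : M) (a : G) : ract (m + m') a = ract m a + ract m' a := by
  simp [ract]

/-- The tuple attached to `k`. -/
def Tt {n : ℕ} (g : Fin n → G) (m : Fin n → M) (k : Fin n → Bool) : Fin n → M :=
  fun i => ract (m i) (gki φ g k i)

theorem mer_false (hφ : ∀ g : G, φ g ∈ Subgroup.center G) {n : ℕ} (p : Fin (n + 1))
    (g : Fin (n + 1) → G) (m : Fin (n + 1) → M) (k : Fin n → Bool) :
    dMmer n p (Tt φ g m (p.insertNth (α := fun _ => Bool) false k))
      = Tt φ (dGdel n p g) (dMmer n p m) k := by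
  funext j
  simp only [dMmer, Tt]
  split_ifs with h1 h2
  · rw [gki_cast φ hφ p _ _ _ _ (by omega)]; simp [gface]
  · rw [gki_cast φ hφ p _ _ _ _ (by omega), gki_succ φ hφ p _ _ _ _ (by omega)]
    simp [gface, ract_add]
  · rw [gki_succ φ hφ p _ _ _ _ (by omega)]; simp [gface]

theorem mer_true (hφ : ∀ g : G, φ g ∈ Subgroup.center G) {n : ℕ} (p : Fin (n + 1))
    (g : Fin (n + 1) → G) (m : Fin (n + 1) → M) (k : Fin n → Bool) :
    dMmer n p (Tt φ g m (p.insertNth (α := fun _ => Bool) true k))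
      = Tt φ (dGconj n p g) (dMconj φ n p g m) k := by
  funext j
  simp only [dMmer, dMconj, Tt]
  split_ifs with h1 h2
  · rw [gki_cast φ hφ p _ _ _ _ (by omega)]; simp [gface, ract_ract]
  · rw [gki_cast φ hφ p _ _ _ _ (by omega), gki_succ φ hφ p _ _ _ _ (by omega)]
    simp [gface, ract_add, ract_ract]
  · rw [gki_succ φ hφ p _ _ _ _ (by omega)]; simp [gface, ract_ract]

theorem mer_zero (hφ : ∀ g : G, φ g ∈ Subgroup.center G) {n : ℕ}
    (g : Fin (n + 2) → G) (m : Fin (n + 2) → M) (k : Fin (n + 1) → Bool) (hk : k 0 = false) :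
    dMmer (n + 1) 0 (Tt φ g m ((1 : Fin (n + 2)).insertNth (α := fun _ => Bool) true k))
      = fun i => ract (dMmer (n + 1) 0
        (Tt φ g m ((1 : Fin (n + 2)).insertNth (α := fun _ => Bool) false k)) i) (φ (g 1)) := by
  funext j
  have e : gki φ (dGconj (n + 1) 1 g) k j = gki φ (dGdel (n + 1) 1 g) k j := by
    rw [gki_eq, gki_eq]
    congr 1
    funext i
    refine Fin.cases ?_ (fun i => ?_) i
    · simp [hk]
    · have : (1 : Fin (n + 2)).succAbove i.succ = i.succ.succ :=
        Fin.succAbove_of_le_castSucc _ _ (by simp [Fin.le_def])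
      simp [dGconj, dGdel, this]
  have := Subgroup.mem_center_iff.1 (hφ (g 1)) (gki φ (dGdel (n + 1) 1 g) k j)
  simp only [dMmer, Tt]
  rw [gki_succ φ hφ 1 _ _ _ _ (by simp), gki_succ φ hφ 1 _ _ _ _ (by simp)]
  simp [gface, ract_ract, e, this]

theorem Qc_conj (hφ : ∀ g : G, φ g ∈ Subgroup.center G) {n : ℕ} (c : G) (a : Fin n → G)
    (i : Fin n) : Qc φ (fun j => c⁻¹ * a j * c) i = c⁻¹ * Qc φ a i * c := by
  unfold Qc
  have h1 : φ (oP n fun j => if j ≤ i then c⁻¹ * a j * c else 1)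
      = φ (oP n fun j => if j ≤ i then a j else 1) := by
    refine phi_oP_congr φ fun j => ?_
    split_ifs
    · exact phi_conj φ hφ _ _
    · rfl
  have h2 : (oP n fun j => if i < j then c⁻¹ * a j * c else 1)
      = c⁻¹ * (oP n fun j => if i < j then a j else 1) * c := by
    have := map_list_prod (MulAut.conj c⁻¹) ((List.finRange n).map fun j => if i < j then a j else 1)
    simp only [MulAut.conj_apply, inv_inv, List.map_map] at this
    unfold oP
    rw [this]
    congr 2
    funext j
    by_cases h : i < j <;> simp [h]
  rw [h1, h2, ← mul_assoc, ← mul_assoc, ← mul_assoc, Subgroup.mem_center_iff.1 (hφ _) c⁻¹]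

theorem last_true (hφ : ∀ g : G, φ g ∈ Subgroup.center G) {n : ℕ}
    (g : Fin (n + 1) → G) (m : Fin (n + 1) → M) (k : Fin n → Bool) :
    (fun j : Fin n => Tt φ g m ((Fin.last n).insertNth (α := fun _ => Bool) true k) j.castSucc)
      = fun i => ract (Tt φ g m ((Fin.last n).insertNth (α := fun _ => Bool) false k) i.castSucc)
          (g (Fin.last n)) := by
  funext j
  have e : gki φ (dGconj n (Fin.last n) g) k j
      = (g (Fin.last n))⁻¹ * gki φ (dGdel n (Fin.last n) g) k j * g (Fin.last n) := by
    rw [gki_eq, gki_eq, ← Qc_conj φ hφ]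
    congr 1
    funext i
    cases k i <;> simp [dGconj, dGdel]
  simp only [Tt]
  rw [gki_cast φ hφ (Fin.last n) _ _ _ _ (by simp), gki_cast φ hφ (Fin.last n) _ _ _ _ (by simp)]
  simp [gface, ract_ract, e, mul_assoc]

theorem del_zero (hφ : ∀ g : G, φ g ∈ Subgroup.center G) {n : ℕ}
    (g : Fin (n + 1) → G) (m : Fin (n + 1) → M) (k : Fin n → Bool) :
    Tt φ (dGconj n 0 g) (dMconj φ n 0 g m) k
      = fun i => ract (Tt φ (dGdel n 0 g) (dMmer n 0 m) k i) (φ (g 0)) := by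
  funext j
  have e : dGconj n 0 g = dGdel n 0 g := by
    funext i; simp [dGconj, dGdel]
  have := Subgroup.mem_center_iff.1 (hφ (g 0)) (gki φ (dGdel n 0 g) k j)
  simp [Tt, dMconj, dMmer, e, ract_ract, this]

theorem wt_insert {n : ℕ} (p : Fin (n + 1)) (b : Bool) (k : Fin n → Bool) :
    wt (p.insertNth (α := fun _ => Bool) b k : Fin (n + 1) → Bool) = (if b then 1 else 0) + wt k := by
  unfold wt
  rw [Fin.sum_univ_succAbove _ p]
  simp

theorem mk_ract {n : ℕ} (t : Fin n → M) (c : G) :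
    QuotientAddGroup.mk' (coinvSub (G := G) (M := M) n) (of fun i => ract (t i) c)
      = QuotientAddGroup.mk' (coinvSub (G := G) (M := M) n) (of t) := by
  rw [← sub_eq_zero, ← map_sub]
  refine (QuotientAddGroup.eq_zero_iff _).2 (AddSubgroup.subset_closure ⟨t, c, rfl⟩)

/-- Splitting the sum over `k` at a position `p ≠ 0`. -/
theorem sum_split {B : Type*} [AddCommGroup B] {n : ℕ} (p : Fin (n + 2)) (hp : p ≠ 0)
    (F : (Fin (n + 2) → Bool) → B) :
    (∑ k ∈ Finset.univ.filter fun k : Fin (n + 2) → Bool => k 0 = false, (-1 : ℤ) ^ wt k • F k)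
      = ∑ k ∈ Finset.univ.filter fun k : Fin (n + 1) → Bool => k 0 = false,
        (-1 : ℤ) ^ wt k • (F (p.insertNth (α := fun _ => Bool) false k)
          - F (p.insertNth (α := fun _ => Bool) true k)) := by
  rw [Finset.sum_filter, Finset.sum_filter,
    ← (Fin.insertNthEquiv (fun _ : Fin (n + 2) => Bool) p).sum_comp, Fintype.sum_prod_type,
    Fintype.sum_bool, ← Finset.sum_add_distrib]
  refine Finset.sum_congr rfl fun k _ => ?_
  have h0 : ∀ b, (p.insertNth (α := fun _ => Bool) b k : Fin (n + 2) → Bool) 0 = k 0 := by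
    intro b
    have : p.succAbove 0 = 0 := Fin.succAbove_ne_zero_zero hp
    conv_lhs => rw [← this]
    rw [Fin.insertNth_apply_succAbove]
  have hE : ∀ b, (Fin.insertNthEquiv (fun _ : Fin (n + 2) => Bool) p) (b, k)
      = p.insertNth (α := fun _ => Bool) b k := fun _ => rfl
  simp only [hE, h0, wt_insert]
  by_cases h : k 0 = false
  · simp [h, pow_add, smul_sub]; abel
  · simp [h]

theorem psiVal_map {B : Type*} [AddCommGroup B] (n : ℕ)
    (x : (Fin (n + 1) → G) × (Fin (n + 1) → M)) (F : FreeAbelianGroup (Fin (n + 1) → M) →+ B) :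
    F (psiVal φ n x) = ∑ k ∈ Finset.univ.filter fun k : Fin (n + 1) → Bool => k 0 = false,
      (-1 : ℤ) ^ wt k • F (of (Tt φ x.1 x.2 k)) := by
  simp [psiVal, map_sum, map_zsmul]
  rfl


/-- `ψ = (ψ_n)` is a chain map from `C^{BR_U}_*(X;ℤ)` to the coinvariant
group chain complex `C^{gp}_*(M;ℤ)_G`: `ψ_{n-1} ∘ ∂^{BR_U}_n = ∂^{gp}_n ∘ ψ_n`.
(The right-hand side is expressed through representatives: since `ψ` is the composite of
`ψ` into the free group with the projection to coinvariants, and the boundary of the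
coinvariant complex is induced by `∂^{gp}`, the map `∂^{gp}_n ∘ ψ_n` equals the projection
of `∂^{gp}_n ∘ ψ_n^{free}`.) -/
theorem psi_chainMap (hφ : ∀ g : G, φ g ∈ Subgroup.center G) :
    ∀ n : ℕ,
      (psiG φ n).comp (dBRU (M := M) φ (n + 1)) =
        ((QuotientAddGroup.mk' (coinvSub (G := G) (M := M) (n + 1))).comp
            (dgp (M := M) (n + 1))).comp (psiFree φ (n + 1)) := by
  intro n
  ext ⟨g, m⟩
  set π := QuotientAddGroup.mk' (coinvSub (G := G) (M := M) (n + 1)) with hπ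
  let S : Finset (Fin (n + 2) → Bool) := Finset.univ.filter fun k => k 0 = false
  let S' : Finset (Fin (n + 1) → Bool) := Finset.univ.filter fun k => k 0 = false
  have hL : ((psiG φ n).comp (dBRU (M := M) φ (n + 1))) (of (g, m))
      = ∑ p : Fin (n + 2), (-1 : ℤ) ^ (p : ℕ) •
        (π (psiVal φ n (dGdel (n + 1) p g, dMmer (n + 1) p m))
          - π (psiVal φ n (dGconj (n + 1) p g, dMconj φ (n + 1) p g m))) := by
    simp [psiG, dBRU, psiFree, map_sum, map_zsmul, hπ]
  have hR : ((π.comp (dgp (M := M) (n + 1))).comp (psiFree φ (n + 1))) (of (g, m))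
      = (∑ p : Fin (n + 2), (-1 : ℤ) ^ (p : ℕ) •
          ∑ k ∈ S, (-1 : ℤ) ^ wt k • π (of (dMmer (n + 1) p (Tt φ g m k))))
        + (-1 : ℤ) ^ (n + 2) • ∑ k ∈ S, (-1 : ℤ) ^ wt k •
            π (of fun j : Fin (n + 1) => Tt φ g m k j.castSucc) := by
    have : ((π.comp (dgp (M := M) (n + 1))).comp (psiFree φ (n + 1))) (of (g, m))
        = (π.comp (dgp (M := M) (n + 1))) (psiVal φ (n + 1) (g, m)) := by
      simp only [psiFree, AddMonoidHom.comp_apply, lift_apply_of]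
    rw [this, psiVal_map]
    simp only [Finset.smul_sum]
    rw [Finset.sum_comm, ← Finset.sum_add_distrib]
    refine Finset.sum_congr rfl fun k _ => ?_
    simp only [dgp, AddMonoidHom.comp_apply, lift_apply_of, map_add, map_sum, map_zsmul,
      smul_add, Finset.smul_sum, smul_comm ((-1 : ℤ) ^ wt k)]
  have hlast : ∑ k ∈ S, (-1 : ℤ) ^ wt k •
      π (of fun j : Fin (n + 1) => Tt φ g m k j.castSucc) = 0 := by
    rw [sum_split (Fin.last (n + 1)) (Fin.last_pos.ne')
      (fun k => π (of fun j : Fin (n + 1) => Tt φ g m k j.castSucc))]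
    refine Finset.sum_eq_zero fun k _ => ?_
    rw [last_true φ hφ, hπ, mk_ract, sub_self, smul_zero]
  rw [hL]
  refine Eq.trans ?_ hR.symm
  rw [hlast, smul_zero, add_zero]
  refine Finset.sum_congr rfl fun p _ => ?_
  congr 1
  rw [psiVal_map, psiVal_map, ← Finset.sum_sub_distrib]
  by_cases hp : p = 0
  · subst hp
    rw [sum_split 1 (by simp) (fun k => π (of (dMmer (n + 1) 0 (Tt φ g m k))))]
    refine Finset.sum_congr rfl fun k hk => ?_
    rw [mer_zero φ hφ g m k (Finset.mem_filter.1 hk).2, del_zero φ hφ, hπ, mk_ract, mk_ract,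
      sub_self, sub_self, smul_zero]
  · rw [sum_split p hp (fun k => π (of (dMmer (n + 1) p (Tt φ g m k))))]
    refine Finset.sum_congr rfl fun k _ => ?_
    rw [mer_false φ hφ, mer_true φ hφ, smul_sub]

end GAlex
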